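/- arXiv:1109.6697 — 2 statements merged into one kernel-verified Lean document; each statement's English description precedes it below -/
import Mathlib

section
/- The action of Γ_Q on R(Q,−k) by left multiplication has only finitely many orbits; that is, there is a finite subset F of R(Q,−k) such that every x ∈ R(Q,−k) equals g·y for some g ∈ Γ_Q and some y ∈ F. -/
open Matrix

/-!
Write `k = -Q[x]` for a vector `x` of negative norm. Changing the sign of `Q` on the line through
`x` turns it into a positive definite form, whose multiple `k Q + 2 (Q x)(Q x)ᵀ` is integral and
has determinant `-kᴺ det Q` in rank `N`, the same for all `x` of norm `-k`. By Hermite's reduction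
theory it has, in a suitable basis of the lattice, a Gram matrix with entries bounded in terms of
`N` and this determinant; the coordinates of `Q x` in the dual basis are then bounded as well. Hence
only finitely many pairs (Gram matrix, coordinates of `Q x`) arise, and if two vectors give the same
pair, then the change between their bases is an isometry of `Q` carrying one to the other.
-/

section PositiveDefinite

variable {ι R : Type*} [CommRing R] {M h : Matrix ι ι R}

lemma posDef_iff_isSymm_and_pos [Fintype ι] [PartialOrder R] [StarRing R] [TrivialStar R] :
    M.PosDef ↔ M.IsSymm ∧ ∀ v, v ≠ 0 → 0 < v ⬝ᵥ M *ᵥ v := by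
  simp only [posDef_iff_dotProduct_mulVec, isHermitian_iff_isSymm, star_trivial]

lemma dotProduct_mulVec_nonneg_of_posDef [Fintype ι] [PartialOrder R] [StarRing R]
    [TrivialStar R] (hM : M.PosDef) (v : ι → R) : 0 ≤ v ⬝ᵥ M *ᵥ v := by
  simpa only [star_trivial] using hM.posSemidef.dotProduct_mulVec_nonneg v

lemma two_mul_abs_apply_le_of_posDef [Finite ι] [LinearOrder R] [IsStrictOrderedRing R]
    [StarRing R] [TrivialStar R] (hM : M.PosDef) (i j : ι) : 2 * |M i j| ≤ M i i + M j j := by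
  classical
  cases nonempty_fintype ι
  have hsymm : M j i = M i j := (posDef_iff_isSymm_and_pos.mp hM).1.apply i j
  have hadd := dotProduct_mulVec_nonneg_of_posDef hM (Pi.single i 1 + Pi.single j 1)
  have hsub := dotProduct_mulVec_nonneg_of_posDef hM (Pi.single i 1 - Pi.single j 1)
  simp only [mulVec_add, mulVec_sub, dotProduct_add, dotProduct_sub, add_dotProduct,
    sub_dotProduct, mulVec_single_one, single_one_dotProduct, col_apply, hsymm] at hadd hsub
  rcases abs_cases (M i j) with ⟨habs, -⟩ | ⟨habs, -⟩ <;> rw [habs] <;> linarith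

variable [Fintype ι]

lemma dotProduct_mulVec_comm_of_isSymm (hM : M.IsSymm) (v w : ι → R) :
    v ⬝ᵥ M *ᵥ w = w ⬝ᵥ M *ᵥ v := by
  rw [← dotProduct_transpose_mulVec, hM.eq]

lemma transpose_mul_mul_comp (M g h : Matrix ι ι R) :
    (g * h)ᵀ * M * (g * h) = hᵀ * (gᵀ * M * g) * h := by
  simp only [transpose_mul, Matrix.mul_assoc]

lemma posDef_transpose_mul_mul [DecidableEq ι] [PartialOrder R] [StarRing R] [TrivialStar R]
    (hM : M.PosDef) (hh : IsUnit h) : (hᵀ * M * h).PosDef := by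
  rw [← conjTranspose_eq_transpose_of_trivial]
  exact hM.conjTranspose_mul_mul_same (mulVec_injective_of_isUnit hh)

lemma abs_apply_le_prod_diag_of_posDef {M : Matrix ι ι ℤ} (hM : M.PosDef) (i j : ι) :
    |M i j| ≤ ∏ l, M l l := by
  classical
  have hone (l : ι) : 1 ≤ M l l := hM.diag_pos
  have hdiag (l : ι) : M l l ≤ ∏ l, M l l := by
    rw [← Finset.mul_prod_erase _ _ (Finset.mem_univ l)]
    exact le_mul_of_one_le_right (zero_le_one.trans (hone l)) (Finset.one_le_prod fun l _ => hone l)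
  linarith [two_mul_abs_apply_le_of_posDef hM i j, hdiag i, hdiag j]

variable [DecidableEq ι]

lemma det_transpose_mul_mul_of_isUnit (M : Matrix ι ι ℤ) {h : Matrix ι ι ℤ} (hh : IsUnit h) :
    (hᵀ * M * h).det = M.det := by
  rw [det_mul, det_mul, det_transpose, mul_right_comm,
    Int.isUnit_mul_self ((isUnit_iff_isUnit_det h).mp hh), one_mul]

lemma exists_isUnit_diag_minimal {M : Matrix ι ι ℤ} (hM : M.PosDef) (j : ι) :
    ∃ g : Matrix ι ι ℤ, IsUnit g ∧
      ∀ h : Matrix ι ι ℤ, IsUnit h → ∀ i, (gᵀ * M * g) j j ≤ (hᵀ * M * h) i i := by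
  obtain ⟨g, hg, hmin⟩ := exists_minimalFor_of_wellFoundedLT
    (fun h : Matrix ι ι ℤ => IsUnit h) (fun h => ((hᵀ * M * h) j j).toNat) ⟨1, isUnit_one⟩
  refine ⟨g, hg, fun h hh i => ?_⟩
  let h' : Matrix ι ι ℤ := h.submatrix id (Equiv.swap i j)
  have hh' : IsUnit h' := (isUnit_submatrix_equiv (Equiv.refl ι) (Equiv.swap i j)).mpr hh
  have hswap : (h'ᵀ * M * h') j j = (hᵀ * M * h) i i := by
    have hcol : h'ᵀ j = hᵀ i := by ext l; simp [h']
    rw [mul_mul_apply, mul_mul_apply, hcol]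
  have hpos : 0 < (h'ᵀ * M * h') j j := (posDef_transpose_mul_mul hM hh').diag_pos
  have hle : ((gᵀ * M * g) j j).toNat ≤ ((h'ᵀ * M * h') j j).toNat :=
    (le_total _ _).elim id (hmin hh')
  omega

end PositiveDefinite

section CompletingTheSquare

variable {ι R : Type*}

/-- The block matrix `[[B, b], [bᵀ, m]]`: for symmetric `B`, the Gram matrix of a basis whose last
vector, indexed by `Unit`, has norm `m` and is the one to project along. -/
def bordered (B : Matrix ι ι R) (b : ι → R) (m : R) : Matrix (ι ⊕ Unit) (ι ⊕ Unit) R :=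
  fromBlocks B (replicateCol Unit b) (replicateRow Unit b) (of fun _ _ => m)

lemma exists_eq_bordered_of_isSymm {M : Matrix (ι ⊕ Unit) (ι ⊕ Unit) R} (hM : M.IsSymm) :
    ∃ (B : Matrix ι ι R) (b : ι → R) (m : R), B.IsSymm ∧ M = bordered B b m := by
  refine ⟨M.toBlocks₁₁, fun i => M (.inl i) (.inr ()), M (.inr ()) (.inr ()),
    .ext fun i j => hM.apply _ _, ?_⟩
  ext (i | i) (j | j) <;> simp [bordered, toBlocks₁₁, hM.apply]

variable [CommRing R]

/-- The Schur complement of the corner `m` in `[[B, b], [bᵀ, m]]`, multiplied by `m` to avoid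
denominators. -/
def scaledSchur (B : Matrix ι ι R) (b : ι → R) (m : R) : Matrix ι ι R :=
  m • B - vecMulVec b b

lemma mul_bordered_eq_scaledSchur_add_sq [Fintype ι] (B : Matrix ι ι R) (b : ι → R) (m : R)
    (v : ι → R) (t : R) :
    m * (Sum.elim v (fun _ => t) ⬝ᵥ bordered B b m *ᵥ Sum.elim v (fun _ => t)) =
      v ⬝ᵥ scaledSchur B b m *ᵥ v + (b ⬝ᵥ v + m * t) ^ 2 := by
  have hcol : replicateCol Unit b *ᵥ (fun _ => t) = t • b := by
    ext i; simp [mulVec, dotProduct, mul_comm]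
  have hrow : replicateRow Unit b *ᵥ v = fun _ => b ⬝ᵥ v := rfl
  have hcorner : (of fun _ _ => m : Matrix Unit Unit R) *ᵥ (fun _ => t) = fun _ => m * t := by
    ext i; simp [mulVec, dotProduct]
  have hunit (c d : R) : (fun _ : Unit => c) ⬝ᵥ (fun _ => d) = c * d := by simp [dotProduct]
  rw [bordered, fromBlocks_mulVec, sumElim_dotProduct_sumElim, scaledSchur, sub_mulVec,
    vecMulVec_mulVec, op_smul_eq_smul]
  simp only [Sum.elim_comp_inl, Sum.elim_comp_inr, hcol, hrow, hcorner, smul_mulVec,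
    dotProduct_add, dotProduct_sub, dotProduct_smul, smul_eq_mul, dotProduct_comm v b, hunit]
  ring

lemma posDef_scaledSchur [Finite ι] [LinearOrder R] [IsStrictOrderedRing R] [StarRing R]
    [TrivialStar R] {B : Matrix ι ι R} {b : ι → R} {m : R} (hB : B.IsSymm) (hm : 0 < m)
    (hM : (bordered B b m).PosDef) : (scaledSchur B b m).PosDef := by
  cases nonempty_fintype ι
  refine posDef_iff_isSymm_and_pos.mpr ⟨?_, fun v hv => ?_⟩
  · ext i j
    simp [scaledSchur, vecMulVec_apply, hB.apply i j, mul_comm (b i)]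
  · have hne : Sum.elim (m • v) (fun _ : Unit => -(b ⬝ᵥ v)) ≠ 0 := fun h0 =>
      smul_ne_zero hm.ne' hv (congrArg (· ∘ Sum.inl) h0)
    have hpos := mul_pos hm ((posDef_iff_isSymm_and_pos.mp hM).2 _ hne)
    have hsq : m * (Sum.elim (m • v) (fun _ => -(b ⬝ᵥ v)) ⬝ᵥ
        bordered B b m *ᵥ Sum.elim (m • v) (fun _ => -(b ⬝ᵥ v))) =
        m ^ 2 * (v ⬝ᵥ scaledSchur B b m *ᵥ v) := by
      rw [mul_bordered_eq_scaledSchur_add_sq]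
      simp only [mulVec_smul, dotProduct_smul, smul_dotProduct, smul_eq_mul]
      ring
    rw [hsq] at hpos
    exact pos_of_mul_pos_right hpos (sq_nonneg m)

variable [Fintype ι] [DecidableEq ι]

lemma det_bordered_mul_pow (B : Matrix ι ι R) (b : ι → R) (m : R) :
    (bordered B b m).det * m ^ Fintype.card ι = (scaledSchur B b m).det * m := by
  have helim : bordered B b m * fromBlocks (m • 1) 0 (-replicateRow Unit b) 1 =
      fromBlocks (scaledSchur B b m) (replicateCol Unit b) 0 (of fun _ _ => m) := by
    have hcol : replicateCol Unit b * replicateRow Unit b = vecMulVec b b :=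
      (vecMulVec_eq Unit b b).symm
    have hcorner : (of fun _ _ => m : Matrix Unit Unit R) * replicateRow Unit b =
        m • replicateRow Unit b := by
      ext; simp [Matrix.mul_apply]
    simp [bordered, scaledSchur, fromBlocks_multiply, hcol, hcorner, sub_eq_add_neg]
  simpa [det_smul] using congrArg det helim

lemma prod_mul_le_det_bordered [LinearOrder R] [IsStrictOrderedRing R] {B : Matrix ι ι R}
    {b : ι → R} {m : R} {d s : ι → R} (hm : 0 < m) (hd : ∀ i, 0 ≤ d i)
    (hds : ∀ i, 3 * (m * d i) ≤ 4 * s i)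
    (hs : 3 ^ (Fintype.card ι).choose 2 * ∏ i, s i ≤
      4 ^ (Fintype.card ι).choose 2 * (scaledSchur B b m).det) :
    3 ^ (Fintype.card (ι ⊕ Unit)).choose 2 * ((∏ i, d i) * m) ≤
      4 ^ (Fintype.card (ι ⊕ Unit)).choose 2 * (bordered B b m).det := by
  have hprod : ∏ i, 3 * (m * d i) ≤ ∏ i, 4 * s i :=
    Finset.prod_le_prod (fun i _ => by have := hd i; positivity) fun i _ => hds i
  simp only [Finset.prod_mul_distrib, Finset.prod_const, Finset.card_univ] at hprod
  have hdet := det_bordered_mul_pow B b m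
  have hchoose : (Fintype.card (ι ⊕ Unit)).choose 2 =
      Fintype.card ι + (Fintype.card ι).choose 2 := by
    rw [Fintype.card_sum, Fintype.card_unit, Nat.choose_succ_succ, Nat.choose_one_right]
  rw [hchoose]
  refine le_of_mul_le_mul_left ?_ (pow_pos hm (Fintype.card ι))
  set n := Fintype.card ι
  calc m ^ n * (3 ^ (n + n.choose 2) * ((∏ i, d i) * m))
      = 3 ^ n.choose 2 * (3 ^ n * (m ^ n * ∏ i, d i)) * m := by ring
    _ ≤ 3 ^ n.choose 2 * (4 ^ n * ∏ i, s i) * m := by gcongr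
    _ = 4 ^ n * (3 ^ n.choose 2 * ∏ i, s i) * m := by ring
    _ ≤ 4 ^ n * (4 ^ n.choose 2 * (scaledSchur B b m).det) * m := by gcongr
    _ = m ^ n * (4 ^ (n + n.choose 2) * (bordered B b m).det) := by
        linear_combination -(4 ^ (n + n.choose 2)) * hdet

lemma exists_abs_two_mul_add_mul_le (s : ℤ) {m : ℤ} (hm : 0 < m) :
    ∃ t, |2 * (s + m * t)| ≤ m := by
  refine ⟨-((2 * s + m) / (2 * m)), abs_le.mpr ?_⟩
  have hdiv := Int.emod_add_mul_ediv (2 * s + m) (2 * m)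
  have hnonneg := Int.emod_nonneg (2 * s + m) (b := 2 * m) (by positivity)
  have hlt := Int.emod_lt_of_pos (2 * s + m) (b := 2 * m) (by positivity)
  constructor <;> linarith

lemma exists_isUnit_bordered_sizeReduced (B : Matrix ι ι ℤ) (b : ι → ℤ) {m : ℤ} (hm : 0 < m)
    {g : Matrix ι ι ℤ} (hg : IsUnit g) :
    ∃ h : Matrix (ι ⊕ Unit) (ι ⊕ Unit) ℤ, IsUnit h ∧
      (hᵀ * bordered B b m * h) (.inr ()) (.inr ()) = m ∧
      ∀ i, 4 * (m * (hᵀ * bordered B b m * h) (.inl i) (.inl i)) ≤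
        4 * (gᵀ * scaledSchur B b m * g) i i + m ^ 2 := by
  choose r hr using fun i => exists_abs_two_mul_add_mul_le (b ⬝ᵥ gᵀ i) hm
  refine ⟨fromBlocks g 0 (replicateRow Unit r) 1, by simpa using hg, ?_, fun i => ?_⟩
  · simp [bordered, fromBlocks_transpose, fromBlocks_multiply]
  · have hcol : (fromBlocks g 0 (replicateRow Unit r) (1 : Matrix Unit Unit ℤ))ᵀ (.inl i) =
        Sum.elim (gᵀ i) (fun _ : Unit => r i) := by
      ext (_ | _) <;> simp
    rw [mul_mul_apply, mul_mul_apply, hcol, mul_bordered_eq_scaledSchur_add_sq]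
    have hsq := sq_le_sq' (abs_le.mp (hr i)).1 (abs_le.mp (hr i)).2
    linarith

end CompletingTheSquare

section Hermite

variable {ι : Type*} [Fintype ι] [DecidableEq ι]

/-- Hermite's inequality in rank `n = |ι|`: every positive definite integral form has a basis of the
lattice in which the product of the diagonal entries of its Gram matrix is at most
`(4/3) ^ (n(n-1)/2)` times the determinant. Denominators are cleared. -/
def HermiteInequality (ι : Type*) [Fintype ι] [DecidableEq ι] : Prop :=
  ∀ M : Matrix ι ι ℤ, M.PosDef → ∃ h : Matrix ι ι ℤ, IsUnit h ∧
    3 ^ (Fintype.card ι).choose 2 * ∏ i, (hᵀ * M * h) i i ≤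
      4 ^ (Fintype.card ι).choose 2 * M.det

namespace HermiteInequality

lemma of_equiv {κ : Type*} [Fintype κ] [DecidableEq κ] (hι : HermiteInequality ι) (e : ι ≃ κ) :
    HermiteInequality κ := by
  intro M hM
  obtain ⟨h, hh, hprod⟩ := hι (M.submatrix e e) (hM.submatrix e.injective)
  refine ⟨h.submatrix e.symm e.symm, (isUnit_submatrix_equiv _ _).mpr hh, ?_⟩
  have hgram : (h.submatrix e.symm e.symm)ᵀ * M * h.submatrix e.symm e.symm =
      (hᵀ * M.submatrix e e * h).submatrix e.symm e.symm := by
    simp [← submatrix_mul_equiv _ _ _ e.symm]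
  rw [det_submatrix_equiv_self, Fintype.card_congr e] at hprod
  simpa only [hgram, submatrix_apply, e.symm.prod_comp fun i => (hᵀ * M.submatrix e e * h) i i]
    using hprod

lemma exists_of_corner_minimal (hι : HermiteInequality ι) {B : Matrix ι ι ℤ} {b : ι → ℤ} {m : ℤ}
    (hB : B.IsSymm) (hM : (bordered B b m).PosDef)
    (hmin : ∀ h : Matrix (ι ⊕ Unit) (ι ⊕ Unit) ℤ, IsUnit h →
      ∀ i, m ≤ (hᵀ * bordered B b m * h) i i) :
    ∃ h : Matrix (ι ⊕ Unit) (ι ⊕ Unit) ℤ, IsUnit h ∧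
      3 ^ (Fintype.card (ι ⊕ Unit)).choose 2 * ∏ i, (hᵀ * bordered B b m * h) i i ≤
        4 ^ (Fintype.card (ι ⊕ Unit)).choose 2 * (bordered B b m).det := by
  have hm : 0 < m := hM.diag_pos (i := .inr ())
  obtain ⟨g, hg, hprod⟩ := hι _ (posDef_scaledSchur hB hm hM)
  obtain ⟨h, hh, hcorner, hdiag⟩ := exists_isUnit_bordered_sizeReduced B b hm hg
  refine ⟨h, hh, ?_⟩
  rw [Fintype.prod_sum_type, Fintype.prod_unique (ι := Unit), hcorner]
  have hm_le (i : ι) := hmin h hh (.inl i)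
  refine prod_mul_le_det_bordered hm (fun i => hm.le.trans (hm_le i)) (fun i => ?_) hprod
  -- `m d ≤ s + m² / 4` and `m ≤ d` give `m d ≤ (4 / 3) s`: this is where `4 / 3` comes from.
  linarith [hdiag i, mul_le_mul_of_nonneg_left (hm_le i) hm.le]

lemma sum_unit (hι : HermiteInequality ι) : HermiteInequality (ι ⊕ Unit) := by
  intro M hM
  obtain ⟨g, hg, hmin⟩ := exists_isUnit_diag_minimal hM (.inr ())
  have hgram := posDef_transpose_mul_mul hM hg
  obtain ⟨B, b, m, hB, hbordered⟩ :=
    exists_eq_bordered_of_isSymm (posDef_iff_isSymm_and_pos.mp hgram).1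
  rw [hbordered] at hgram hmin
  obtain ⟨h, hh, hprod⟩ := hι.exists_of_corner_minimal hB hgram fun h hh i => by
    rw [← hbordered, ← transpose_mul_mul_comp]
    exact hmin (g * h) (hg.mul hh) i
  rw [← hbordered, det_transpose_mul_mul_of_isUnit M hg, ← transpose_mul_mul_comp] at hprod
  exact ⟨g * h, hg.mul hh, hprod⟩

end HermiteInequality

theorem hermiteInequality (ι : Type*) [Fintype ι] [DecidableEq ι] : HermiteInequality ι := by
  have hFin (n : ℕ) : HermiteInequality (Fin n) := by
    induction n with
    | zero => exact fun M _ => ⟨1, isUnit_one, by simp⟩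
    | succ n ih => exact ih.sum_unit.of_equiv (Fintype.equivOfCardEq (by simp))
  exact (hFin _).of_equiv (Fintype.equivFin ι).symm

theorem exists_isUnit_abs_apply_le_det {M : Matrix ι ι ℤ} (hM : M.PosDef) :
    ∃ h : Matrix ι ι ℤ, IsUnit h ∧
      ∀ i j, |(hᵀ * M * h) i j| ≤ 4 ^ (Fintype.card ι).choose 2 * M.det := by
  obtain ⟨h, hh, hprod⟩ := hermiteInequality ι M hM
  refine ⟨h, hh, fun i j => ?_⟩
  have hentry := abs_apply_le_prod_diag_of_posDef (posDef_transpose_mul_mul hM hh) i j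
  have hprod_nonneg := (abs_nonneg _).trans hentry
  calc |(hᵀ * M * h) i j| ≤ ∏ l, (hᵀ * M * h) l l := hentry
    _ ≤ 3 ^ (Fintype.card ι).choose 2 * ∏ l, (hᵀ * M * h) l l :=
        le_mul_of_one_le_left hprod_nonneg (one_le_pow₀ (by norm_num))
    _ ≤ 4 ^ (Fintype.card ι).choose 2 * M.det := hprod

end Hermite

section Majorant

variable {ι R : Type*} [Fintype ι] [CommRing R]

/-- Hermite's majorant of the form `Q` at a vector `x` with `Q[x] < 0`, scaled by `-Q[x]`: the form
that agrees with `-Q[x] Q` on the orthogonal complement of `x` and with its negative on `x`. -/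
def majorant (Q : Matrix ι ι R) (x : ι → R) : Matrix ι ι R :=
  2 • vecMulVec (Q *ᵥ x) (Q *ᵥ x) - (x ⬝ᵥ Q *ᵥ x) • Q

lemma dotProduct_majorant_mulVec (Q : Matrix ι ι R) (x v : ι → R) :
    v ⬝ᵥ majorant Q x *ᵥ v = 2 * (v ⬝ᵥ Q *ᵥ x) ^ 2 - (x ⬝ᵥ Q *ᵥ x) * (v ⬝ᵥ Q *ᵥ v) := by
  rw [majorant, sub_mulVec, smul_mulVec, smul_mulVec, vecMulVec_mulVec, op_smul_eq_smul,
    dotProduct_sub, dotProduct_smul, dotProduct_smul, dotProduct_smul, dotProduct_comm _ v]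
  simp only [smul_eq_mul, nsmul_eq_mul, Nat.cast_ofNat]
  ring

lemma transpose_mul_majorant_mul (Q g : Matrix ι ι R) (x : ι → R) :
    gᵀ * majorant Q x * g =
      2 • vecMulVec (gᵀ *ᵥ Q *ᵥ x) (gᵀ *ᵥ Q *ᵥ x) - (x ⬝ᵥ Q *ᵥ x) • (gᵀ * Q * g) := by
  simp only [majorant, Matrix.mul_sub, Matrix.sub_mul, Matrix.mul_smul, Matrix.smul_mul,
    mul_vecMulVec, vecMulVec_mul, mulVec_transpose]

variable [DecidableEq ι]

lemma det_majorant [Nonempty ι] (Q : Matrix ι ι R) (x : ι → R) :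
    (majorant Q x).det = -(-(x ⬝ᵥ Q *ᵥ x)) ^ Fintype.card ι * Q.det := by
  set q := x ⬝ᵥ Q *ᵥ x
  have hfactor : majorant Q x = Q * -(scalar ι q - vecMulVec ((2 : R) • x) (Q *ᵥ x)) := by
    rw [Matrix.mul_neg, Matrix.mul_sub, mul_vecMulVec, mulVec_smul, smul_vecMulVec, neg_sub,
      scalar_apply, ← smul_one_eq_diagonal, Matrix.mul_smul, Matrix.mul_one, majorant,
      ofNat_smul_eq_nsmul R]
  have hscalar : (scalar ι q - vecMulVec ((2 : R) • x) (Q *ᵥ x)).det = -q ^ Fintype.card ι := by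
    rw [← eval_charpoly, charpoly_vecMulVec]
    simp only [smul_dotProduct, Polynomial.eval_sub, Polynomial.eval_pow, Polynomial.eval_X,
      Polynomial.eval_smul, smul_eq_mul]
    rw [mul_assoc, mul_pow_sub_one Fintype.card_ne_zero]
    ring
  rw [hfactor, det_mul, det_neg, hscalar, neg_pow q]
  ring

lemma exists_isometry_of_majorant_eq [IsDomain R] {Q g h : Matrix ι ι R} {x y : ι → R}
    (hQ : Q.det ≠ 0) (hx : x ⬝ᵥ Q *ᵥ x ≠ 0) (hxy : y ⬝ᵥ Q *ᵥ y = x ⬝ᵥ Q *ᵥ x) (hg : IsUnit g)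
    (hh : IsUnit h) (hgram : gᵀ * majorant Q x * g = hᵀ * majorant Q y * h)
    (hcoord : gᵀ *ᵥ Q *ᵥ x = hᵀ *ᵥ Q *ᵥ y) :
    ∃ f : Matrix ι ι R, IsUnit f ∧ fᵀ * Q * f = Q ∧ f *ᵥ y = x := by
  have hgram_Q : gᵀ * Q * g = hᵀ * Q * h := by
    rw [transpose_mul_majorant_mul, transpose_mul_majorant_mul, hcoord, hxy] at hgram
    exact smul_right_injective _ hx (sub_right_injective hgram)
  obtain ⟨u, rfl⟩ := hh
  have hu : (u : Matrix ι ι R) * (↑u⁻¹ : Matrix ι ι R) = 1 := u.mul_inv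
  refine ⟨g * (↑u⁻¹ : Matrix ι ι R), hg.mul u⁻¹.isUnit, ?_, ?_⟩
  · rw [transpose_mul_mul_comp, hgram_Q, ← transpose_mul_mul_comp, hu, transpose_one,
      Matrix.one_mul, Matrix.mul_one]
  · have hinj : Function.Injective (gᵀ * Q).mulVec := mulVec_injective_of_det_ne_zero <| by
      rw [det_mul, det_transpose]
      exact mul_ne_zero ((isUnit_iff_isUnit_det g).mp hg).ne_zero hQ
    apply hinj
    rw [mulVec_mulVec, ← Matrix.mul_assoc, hgram_Q, Matrix.mul_assoc, hu, Matrix.mul_one,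
      ← mulVec_mulVec, ← mulVec_mulVec, hcoord]

end Majorant

section Lorentzian

variable {ι R : Type*} [Fintype ι] [CommRing R]

lemma dotProduct_fromBlocks_neg_mulVec (A : Matrix ι ι R) (a : R) (x w : ι ⊕ Unit → R) :
    x ⬝ᵥ fromBlocks A 0 0 (of fun _ _ => -a) *ᵥ w =
      (x ∘ Sum.inl) ⬝ᵥ A *ᵥ (w ∘ Sum.inl) - a * x (.inr ()) * w (.inr ()) := by
  nth_rw 1 [← Sum.elim_comp_inl_inr x]
  rw [fromBlocks_mulVec, sumElim_dotProduct_sumElim]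
  have hunit : (x ∘ Sum.inr) ⬝ᵥ (of fun _ _ => -a : Matrix Unit Unit R) *ᵥ (w ∘ Sum.inr) =
      -(a * x (.inr ()) * w (.inr ())) := by
    simp [mulVec, dotProduct, mul_left_comm, mul_assoc]
  rw [zero_mulVec, zero_mulVec, add_zero, zero_add, hunit, sub_eq_add_neg]

variable [LinearOrder R]

/-- A symmetric matrix is Lorentzian if its form is positive definite on the orthogonal complement
of every vector of negative norm. For a nondegenerate form this says that there is at most one
negative direction; forms without vectors of negative norm are included. -/
structure IsLorentzian (Q : Matrix ι ι R) : Prop where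
  isSymm : Q.IsSymm
  pos_of_orthogonal ⦃x w : ι → R⦄ : x ⬝ᵥ Q *ᵥ x < 0 → x ⬝ᵥ Q *ᵥ w = 0 → w ≠ 0 → 0 < w ⬝ᵥ Q *ᵥ w

variable [IsStrictOrderedRing R] {Q : Matrix ι ι R} {x : ι → R}

theorem isLorentzian_fromBlocks_neg [StarRing R] [TrivialStar R] {A : Matrix ι ι R}
    (hA : A.PosDef) (a : R) :
    IsLorentzian (fromBlocks A 0 0 (of fun _ _ => -a) : Matrix (ι ⊕ Unit) (ι ⊕ Unit) R) where
  isSymm := .fromBlocks (posDef_iff_isSymm_and_pos.mp hA).1 (by simp) rfl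
  pos_of_orthogonal x w hx hxw hw := by
    obtain ⟨hA_symm, hA_pos⟩ := posDef_iff_isSymm_and_pos.mp hA
    rw [dotProduct_fromBlocks_neg_mulVec] at hx hxw ⊢
    set p := x ∘ Sum.inl
    set q := w ∘ Sum.inl
    set s := x (.inr ())
    set t := w (.inr ())
    have hs : s ≠ 0 := fun hs => by
      rw [hs, mul_zero, sub_zero] at hx
      exact hx.not_ge (dotProduct_mulVec_nonneg_of_posDef hA p)
    have hsplit : s ^ 2 * (q ⬝ᵥ A *ᵥ q - a * t * t) =
        (s • q - t • p) ⬝ᵥ A *ᵥ (s • q - t • p) - t ^ 2 * (p ⬝ᵥ A *ᵥ p - a * s * s) := by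
      simp only [mulVec_sub, mulVec_smul, dotProduct_sub, sub_dotProduct, dotProduct_smul,
        smul_dotProduct, smul_eq_mul, dotProduct_mulVec_comm_of_isSymm hA_symm q p]
      linear_combination (2 * s * t) * hxw
    refine pos_of_mul_pos_right (hsplit ▸ ?_) (sq_nonneg s)
    rcases eq_or_ne t 0 with ht0 | ht0
    · have hq0 : q ≠ 0 := fun hq0 => hw <| by
        ext (i | _)
        · exact congrFun hq0 i
        · exact ht0
      simpa [ht0] using hA_pos (s • q) (smul_ne_zero hs hq0)
    · have := dotProduct_mulVec_nonneg_of_posDef hA (s • q - t • p)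
      have ht2 : 0 < t ^ 2 := by positivity
      linarith [mul_neg_of_pos_of_neg ht2 hx]

namespace IsLorentzian

lemma det_ne_zero [DecidableEq ι] (hQ : IsLorentzian Q) (hx : x ⬝ᵥ Q *ᵥ x < 0) : Q.det ≠ 0 := by
  intro hdet
  obtain ⟨v, hv, hQv⟩ := exists_mulVec_eq_zero_iff.mpr hdet
  simpa [hQv] using hQ.pos_of_orthogonal hx (by simp [hQv]) hv

lemma mul_le_sq (hQ : IsLorentzian Q) (hx : x ⬝ᵥ Q *ᵥ x < 0) (v : ι → R) :
    (x ⬝ᵥ Q *ᵥ x) * (v ⬝ᵥ Q *ᵥ v) ≤ (v ⬝ᵥ Q *ᵥ x) ^ 2 := by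
  set q := x ⬝ᵥ Q *ᵥ x
  set w := (v ⬝ᵥ Q *ᵥ x) • x - q • v
  have hxw : x ⬝ᵥ Q *ᵥ w = 0 := by
    simp only [w, mulVec_sub, mulVec_smul, dotProduct_sub, dotProduct_smul, smul_eq_mul,
      dotProduct_mulVec_comm_of_isSymm hQ.isSymm x v]
    ring
  have hw : w ⬝ᵥ Q *ᵥ w = -q * ((v ⬝ᵥ Q *ᵥ x) ^ 2 - q * (v ⬝ᵥ Q *ᵥ v)) := by
    simp only [w, mulVec_sub, mulVec_smul, dotProduct_sub, sub_dotProduct, dotProduct_smul,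
      smul_dotProduct, smul_eq_mul, dotProduct_mulVec_comm_of_isSymm hQ.isSymm x v]
    ring
  have hw_nonneg : 0 ≤ w ⬝ᵥ Q *ᵥ w := by
    rcases eq_or_ne w 0 with h0 | h0
    · simp [h0]
    · exact (hQ.pos_of_orthogonal hx hxw h0).le
  rw [hw] at hw_nonneg
  linarith [nonneg_of_mul_nonneg_right hw_nonneg (neg_pos.mpr hx)]

lemma sq_le_majorant (hQ : IsLorentzian Q) (hx : x ⬝ᵥ Q *ᵥ x < 0) (v : ι → R) :
    (v ⬝ᵥ Q *ᵥ x) ^ 2 ≤ v ⬝ᵥ majorant Q x *ᵥ v := by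
  rw [dotProduct_majorant_mulVec]
  linarith [hQ.mul_le_sq hx v]

lemma posDef_majorant [StarRing R] [TrivialStar R] (hQ : IsLorentzian Q)
    (hx : x ⬝ᵥ Q *ᵥ x < 0) : (majorant Q x).PosDef := by
  refine posDef_iff_isSymm_and_pos.mpr ⟨?_, fun v hv => ?_⟩
  · ext i j
    simp [majorant, vecMulVec_apply, hQ.isSymm.apply i j, mul_comm ((Q *ᵥ x) i)]
  · rcases eq_or_ne (v ⬝ᵥ Q *ᵥ x) 0 with hvx | hvx
    · have hv_pos := hQ.pos_of_orthogonal hx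
        (by rwa [dotProduct_mulVec_comm_of_isSymm hQ.isSymm]) hv
      rw [dotProduct_majorant_mulVec, hvx]
      linarith [mul_neg_of_neg_of_pos hx hv_pos]
    · have hsq : 0 < (v ⬝ᵥ Q *ᵥ x) ^ 2 := by positivity
      exact hsq.trans_le (hQ.sq_le_majorant hx v)

theorem exists_isUnit_abs_le_det_majorant [DecidableEq ι] {Q : Matrix ι ι ℤ}
    (hQ : IsLorentzian Q) {x : ι → ℤ} (hx : x ⬝ᵥ Q *ᵥ x < 0) :
    ∃ h : Matrix ι ι ℤ, IsUnit h ∧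
      (∀ i j, |(hᵀ * majorant Q x * h) i j| ≤
        4 ^ (Fintype.card ι).choose 2 * (majorant Q x).det) ∧
      ∀ i, |(hᵀ *ᵥ Q *ᵥ x) i| ≤ 4 ^ (Fintype.card ι).choose 2 * (majorant Q x).det := by
  obtain ⟨h, hh, hgram⟩ := exists_isUnit_abs_apply_le_det (hQ.posDef_majorant hx)
  refine ⟨h, hh, hgram, fun i => ?_⟩
  calc |(hᵀ *ᵥ Q *ᵥ x) i| ≤ |(hᵀ *ᵥ Q *ᵥ x) i| ^ 2 := Int.le_self_sq _
    _ = (hᵀ i ⬝ᵥ Q *ᵥ x) ^ 2 := sq_abs _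
    _ ≤ hᵀ i ⬝ᵥ majorant Q x *ᵥ hᵀ i := hQ.sq_le_majorant hx _
    _ = (hᵀ * majorant Q x * h) i i := (mul_mul_apply _ _ _ i i).symm
    _ ≤ 4 ^ (Fintype.card ι).choose 2 * (majorant Q x).det :=
        (le_abs_self _).trans (hgram i i)

end IsLorentzian

end Lorentzian

section Orbits

variable {ι : Type*}

lemma finite_setOf_forall_abs_le [Finite ι] (K : ℤ) : {v : ι → ℤ | ∀ i, |v i| ≤ K}.Finite :=
  Set.Finite.pi' fun _ => (Set.finite_Icc (-K) K).subset fun _ => abs_le.mp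

lemma finite_setOf_forall_forall_abs_le [Finite ι] (K : ℤ) :
    {N : Matrix ι ι ℤ | ∀ i j, |N i j| ≤ K}.Finite :=
  Set.Finite.pi' fun _ => finite_setOf_forall_abs_le K

theorem finitely_many_orbits_real_general [Fintype ι] [DecidableEq ι] {Q : Matrix ι ι ℤ}
    (hQ : IsLorentzian Q) {k : ℤ} (hk : 0 < k) :
    ∃ F : Finset (ι → ℤ),
      (∀ y ∈ F, y ⬝ᵥ Q *ᵥ y = -k) ∧
      ∀ x : ι → ℤ, x ⬝ᵥ Q *ᵥ x = -k →
        ∃ y ∈ F, ∃ g : Matrix ι ι ℤ, IsUnit g.det ∧ gᵀ * Q * g = Q ∧ g *ᵥ y = x := by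
  let S : Set (ι → ℤ) := {x | x ⬝ᵥ Q *ᵥ x = -k}
  have hneg {x : ι → ℤ} (hx : x ∈ S) : x ⬝ᵥ Q *ᵥ x < 0 := hx.trans_lt (neg_neg_of_pos hk)
  let K : ℤ := 4 ^ (Fintype.card ι).choose 2 * (-k ^ Fintype.card ι * Q.det)
  have hdet {x : ι → ℤ} (hx : x ∈ S) : (majorant Q x).det = -k ^ Fintype.card ι * Q.det := by
    have : Nonempty ι := not_isEmpty_iff.mp fun _ => (hneg hx).ne (by simp)
    rw [det_majorant, hx, neg_neg]
  choose! h hh hgram hcoord using fun (x : ι → ℤ) (hx : x ∈ S) =>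
    hdet hx ▸ hQ.exists_isUnit_abs_le_det_majorant (hneg hx)
  let f (x : ι → ℤ) : Matrix ι ι ℤ × (ι → ℤ) :=
    ((h x)ᵀ * majorant Q x * h x, (h x)ᵀ *ᵥ Q *ᵥ x)
  have hfin : (f '' S).Finite :=
    ((finite_setOf_forall_forall_abs_le K).prod (finite_setOf_forall_abs_le K)).subset <|
      Set.image_subset_iff.mpr fun x hx => ⟨hgram x hx, hcoord x hx⟩
  obtain ⟨F, hFS, hF, hFf⟩ := hfin.exists_subset_finite_image_eq subset_rfl
  refine ⟨hF.toFinset, fun y hy => hFS (hF.mem_toFinset.mp hy), fun x hx => ?_⟩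
  obtain ⟨y, hy, hyx⟩ : f x ∈ f '' F := hFf ▸ Set.mem_image_of_mem f hx
  obtain ⟨g, hg, hgQ, hgy⟩ := exists_isometry_of_majorant_eq (hQ.det_ne_zero (hneg hx))
    (hneg hx).ne ((hFS hy).trans hx.symm) (hh x hx) (hh y (hFS hy))
    (congrArg Prod.fst hyx).symm (congrArg Prod.snd hyx).symm
  exact ⟨y, hF.mem_toFinset.mpr hy, g, (isUnit_iff_isUnit_det g).mp hg, hgQ, hgy⟩

end Orbits

/-- The action of `Γ_Q` on `R(Q,−k)` by left multiplication has only finitely many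
orbits: there is a finite subset `F` of `R(Q,−k)` such that every `x ∈ R(Q,−k)`
equals `g · y` for some `g ∈ Γ_Q` and some `y ∈ F`. Here `Q = diag(A, -a)` with `A`
an `n × n` symmetric positive definite integer matrix and `a` a positive integer. -/
theorem finitely_many_orbits_real (n : ℕ) (hn : 1 ≤ n)
    (A : Matrix (Fin n) (Fin n) ℤ) (hAsymm : A.IsSymm)
    (hApos : ∀ x : Fin n → ℤ, x ≠ 0 → 0 < x ⬝ᵥ A.mulVec x)
    (a : ℤ) (ha : 0 < a) (k : ℤ) (hk : 0 < k)
    (Q : Matrix (Fin n ⊕ Unit) (Fin n ⊕ Unit) ℤ)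
    (hQ : Q = Matrix.fromBlocks A 0 0 (Matrix.of fun _ _ => -a)) :
    ∃ F : Finset ((Fin n ⊕ Unit) → ℤ),
      (∀ y ∈ F, y ⬝ᵥ Q.mulVec y = -k) ∧
      ∀ x : (Fin n ⊕ Unit) → ℤ, x ⬝ᵥ Q.mulVec x = -k →
        ∃ y ∈ F, ∃ g : Matrix (Fin n ⊕ Unit) (Fin n ⊕ Unit) ℤ,
          IsUnit g.det ∧ gᵀ * Q * g = Q ∧ g.mulVec y = x := by
  subst hQ
  exact finitely_many_orbits_real_general
    (isLorentzian_fromBlocks_neg (posDef_iff_isSymm_and_pos.mpr ⟨hAsymm, hApos⟩) a) hk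
end

section
/- (Local density computation.) For Q = I_{2,1} over the Gaussian integers and k = 1: for every prime p, the limit δ_p := lim_{j→∞} p^{−5j}·#{x ∈ (ℤ[i]/p^jℤ[i])³ : x_1x̄_1 + x_2x̄_2 − x_3x̄_3 = −1 in ℤ[i]/p^jℤ[i]} exists, and the product over all primes satisfies ∏_p δ_p = 2³·3·π^{−3} = 24/π³. -/
open Filter Topology

/-!
Writing `Q(x) = ∑ aᵢ xᵢ x̄ᵢ` in real and imaginary parts gives a quadratic form in `2n` variables.
If every `t` in the kernel of a surjection `R → S` of finite rings is twice an element `r` of square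
zero, then `1 + t = (1 + r)²`, so multiplication by units permutes the level sets of `Q` over any
coset of the kernel that consists of units. Hence the densities of `Q = c`, with `c` a unit, over
`R` and over `S` agree. This applies to `ℤ/p^{j+1} → ℤ/p^j` for odd `p` and `j ≥ 1`, and for
`p = 2` and `j ≥ 3`, so the local density is read off modulo `p`, respectively modulo `8`.

Over a finite field with `q` elements and `ε = χ(-1)`, splitting off one variable at a time gives
`q · #{Q = c} = q^{2n} - (εq)^n` for `c ≠ 0`. So for odd `p` the density is `1 - (χ₄(p) / p)³` when
`n = 3`, while the solutions modulo `8` give `3/4` at `p = 2`. Since `χ₄³ = χ₄`, the odd primes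
contribute the inverse of the Euler product of `L(3, χ₄) = π³ / 32`, and
`3/4 · 32/π³ = 24/π³`.
-/

section RepNumber

variable {R V W : Type*} [CommRing R] [AddCommGroup V] [Module R V] [AddCommGroup W] [Module R W]

/-- The representation number of `c` by `Q`, i.e. the number of solutions of `Q v = c`. -/
noncomputable def repNumber (Q : QuadraticForm R V) (c : R) : ℕ :=
  Nat.card {v // Q v = c}

/-- The density of the solutions of `Q v = c`: their number divided by `#V / #R`, the average
number of solutions over all values of `c`. -/
noncomputable def repDensity (Q : QuadraticForm R V) (c : R) : ℝ :=
  Nat.card R * repNumber Q c / Nat.card V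

lemma sum_repNumber [Fintype R] [Finite V] (Q : QuadraticForm R V) :
    ∑ c, repNumber Q c = Nat.card V := by
  simp only [repNumber]
  rw [← Nat.card_sigma, Nat.card_congr (Equiv.sigmaFiberEquiv Q)]

lemma repNumber_units_smul (u : Rˣ) (Q : QuadraticForm R V) (c : R) :
    repNumber ((u : R) • Q) c = repNumber Q (↑u⁻¹ * c) :=
  Nat.card_congr <| Equiv.subtypeEquivRight fun v => by
    rw [smul_apply, smul_eq_mul, Units.eq_inv_mul_iff_mul_eq]

lemma repNumber_eq_of_isometryEquiv {Q : QuadraticForm R V} {Q' : QuadraticForm R W}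
    (e : Q.IsometryEquiv Q') (c : R) : repNumber Q c = repNumber Q' c :=
  Nat.card_congr <| e.toEquiv.subtypeEquiv fun v => by
    rw [← e.map_app v]; rfl

lemma repNumber_prod [Fintype R] [Finite V] [Finite W] (Q : QuadraticForm R V)
    (Q' : QuadraticForm R W) (c : R) :
    repNumber (Q.prod Q') c = ∑ m, repNumber Q m * repNumber Q' (c - m) := by
  let e : {x // Q.prod Q' x = c} ≃ Σ m : R, {v // Q v = m} × {w // Q' w = c - m} :=
    { toFun x := ⟨Q x.1.1, ⟨x.1.1, rfl⟩, ⟨x.1.2, eq_sub_of_add_eq' x.2⟩⟩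
      invFun y := ⟨(y.2.1, y.2.2), by
        rw [QuadraticMap.prod_apply, y.2.1.2, y.2.2.2, add_sub_cancel]⟩
      left_inv _ := rfl
      right_inv := by
        rintro ⟨_, ⟨v, rfl⟩, w⟩
        rfl }
  simp only [repNumber, ← Nat.card_prod]
  rw [Nat.card_congr e, Nat.card_sigma]

end RepNumber

section Lifting

lemma natCard_preimage_eq_mul_of_fiber_equiv {α β κ : Type*} {g : α → β} {T : Set β}
    (e : ∀ t ∈ T, Nonempty ({x // g x = t} ≃ κ)) :
    Nat.card (g ⁻¹' T) = Nat.card T * Nat.card κ := by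
  rw [← Nat.card_prod]
  exact Nat.card_congr <| (Equiv.sigmaSubtypeFiberEquivSubtype g fun _ => Iff.rfl).symm.trans <|
    (Equiv.sigmaCongrRight fun t : T => (e t t.2).some).trans (Equiv.sigmaEquivProd _ _)

lemma natCard_preimage_eq_mul_natCard_ker {G H : Type*} [AddGroup G] [AddGroup H] {f : G →+ H}
    (hf : Function.Surjective f) (T : Set H) :
    Nat.card (f ⁻¹' T) = Nat.card T * Nat.card f.ker :=
  natCard_preimage_eq_mul_of_fiber_equiv fun t _ =>
    ⟨AddMonoidHom.fiberEquivKerOfSurjective hf t⟩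

lemma natCard_eq_mul_natCard_ker {G H : Type*} [AddGroup G] [AddGroup H] {f : G →+ H}
    (hf : Function.Surjective f) : Nat.card G = Nat.card H * Nat.card f.ker := by
  simpa using natCard_preimage_eq_mul_natCard_ker hf Set.univ

/-- `t` is twice an element of square zero. Then `1 + t` is the square of a unit. -/
def IsTwiceSqZero {R : Type*} [CommRing R] (t : R) : Prop :=
  ∃ r : R, r ^ 2 = 0 ∧ 2 * r = t

variable {R S V W : Type*} [CommRing R] [CommRing S] [AddCommGroup V] [Module R V]
  [AddCommGroup W] [Module S W]

lemma IsTwiceSqZero.mul_left {t : R} (ht : IsTwiceSqZero t) (s : R) : IsTwiceSqZero (s * t) := by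
  obtain ⟨r, hr, rfl⟩ := ht
  exact ⟨s * r, by rw [mul_pow, hr, mul_zero], by ring⟩

lemma IsTwiceSqZero.exists_unit_sq_eq_one_add {t : R} (ht : IsTwiceSqZero t) :
    ∃ u : Rˣ, (u : R) ^ 2 = 1 + t := by
  obtain ⟨r, hr, rfl⟩ := ht
  exact ⟨⟨1 + r, 1 - r, by linear_combination -hr, by linear_combination -hr⟩,
    by linear_combination hr⟩

/-- Multiplication by a unit `u`, as a bijection between the solutions of `Q v = c` and those of
`Q v = u² c`. -/
def fiberEquivSqMul (Q : QuadraticForm R V) (u : Rˣ) (c : R) :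
    {v // Q v = c} ≃ {v // Q v = (u : R) ^ 2 * c} :=
  (MulAction.toPerm u).subtypeEquiv fun v => by
    rw [MulAction.toPerm_apply, Units.smul_def, QuadraticMap.map_smul, smul_eq_mul, ← sq,
      (u.isUnit.pow 2).mul_right_inj]

theorem repNumber_mul_natCard_ker {π : R →+* S} {f : V →+ W} (hf : Function.Surjective f)
    (hker : ∀ t, π t = 0 → IsTwiceSqZero t) {Q : QuadraticForm R V} {Q' : QuadraticForm S W}
    (hQ : ∀ v, Q' (f v) = π (Q v)) {c : R} (hc : IsUnit c) :
    repNumber Q c * Nat.card (π : R →+ S).ker = repNumber Q' (π c) * Nat.card f.ker := by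
  set T : Set R := π ⁻¹' {π c}
  have hfibers : ∀ t ∈ T, Nonempty ({v // Q v = t} ≃ {v // Q v = c}) := by
    obtain ⟨c, rfl⟩ := hc
    intro t (ht : π t = π c)
    obtain ⟨u, hu⟩ := ((hker (t - c) (by rw [map_sub, ht, sub_self])).mul_left
      ↑c⁻¹).exists_unit_sq_eq_one_add
    have hut : (u : R) ^ 2 * c = t := by
      rw [hu]
      linear_combination (t - c) * c.inv_mul
    exact hut ▸ ⟨(fiberEquivSqMul Q u c).symm⟩
  have hT : Nat.card T = Nat.card (π : R →+ S).ker :=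
    Nat.card_congr ((π : R →+ S).fiberEquivKer c)
  calc repNumber Q c * Nat.card (π : R →+ S).ker
      = Nat.card (Q ⁻¹' T) := by
        rw [natCard_preimage_eq_mul_of_fiber_equiv hfibers, hT, repNumber, mul_comm]
    _ = Nat.card (f ⁻¹' {w | Q' w = π c}) := by
        congr! 2
        ext v
        change π (Q v) = π c ↔ Q' (f v) = π c
        rw [hQ]
    _ = repNumber Q' (π c) * Nat.card f.ker := natCard_preimage_eq_mul_natCard_ker hf _

theorem repDensity_eq_of_lift [Finite R] [Finite V] {π : R →+* S} (hπ : Function.Surjective π)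
    {f : V →+ W} (hf : Function.Surjective f) (hker : ∀ t, π t = 0 → IsTwiceSqZero t)
    {Q : QuadraticForm R V} {Q' : QuadraticForm S W} (hQ : ∀ v, Q' (f v) = π (Q v))
    {c : R} (hc : IsUnit c) :
    repDensity Q c = repDensity Q' (π c) := by
  have : Finite S := .of_surjective π hπ
  have : Finite W := .of_surjective f hf
  have hK : (Nat.card f.ker : ℝ) ≠ 0 := by exact_mod_cast Nat.card_pos.ne'
  have hW : (Nat.card W : ℝ) ≠ 0 := by exact_mod_cast Nat.card_pos.ne'
  have hcount : (repNumber Q c * Nat.card (π : R →+ S).ker : ℝ) =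
      repNumber Q' (π c) * Nat.card f.ker := by
    exact_mod_cast repNumber_mul_natCard_ker hf hker hQ hc
  rw [repDensity, repDensity, natCard_eq_mul_natCard_ker (f := (π : R →+ S)) hπ,
    natCard_eq_mul_natCard_ker hf]
  push_cast
  rw [div_eq_div_iff (by positivity) (by positivity)]
  linear_combination (Nat.card S * Nat.card W : ℝ) * hcount

end Lifting

section DiagHermitian

variable {R S ι : Type*} [CommRing R] [CommRing S] [Fintype ι]

variable (R) in
/-- The norm form `a² + b²` of `R[i]`, an element `a + bi` being encoded as the pair `(a, b)`. -/
def gaussianNorm : QuadraticForm R (R × R) :=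
  QuadraticMap.sq.prod QuadraticMap.sq

lemma gaussianNorm_apply (z : R × R) : gaussianNorm R z = z.1 ^ 2 + z.2 ^ 2 := by
  simp [gaussianNorm, sq]

/-- The diagonal Hermitian form `∑ aᵢ xᵢ x̄ᵢ` on `R[i]^ι`, as a quadratic form over `R`. -/
def diagHermitian (a : ι → R) : QuadraticForm R (ι → R × R) :=
  QuadraticMap.pi fun i => a i • gaussianNorm R

lemma diagHermitian_apply (a : ι → R) (x : ι → R × R) :
    diagHermitian a x = ∑ i, a i * ((x i).1 ^ 2 + (x i).2 ^ 2) := by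
  simp [diagHermitian, gaussianNorm_apply]

lemma map_diagHermitian (π : R →+* S) (a : ι → R) (x : ι → R × R) :
    π (diagHermitian a x) = diagHermitian (fun i => π (a i)) fun i => (π (x i).1, π (x i).2) := by
  simp [diagHermitian_apply]

/-- The splitting of the first variable off a diagonal Hermitian form, as an isometry. -/
def diagHermitianConsEquiv {n : ℕ} (b : R) (a : Fin n → R) :
    ((b • gaussianNorm R).prod (diagHermitian a)).IsometryEquiv
      (diagHermitian (Fin.cons b a : Fin (n + 1) → R)) where
  toLinearEquiv := Fin.consLinearEquiv R fun _ => R × R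
  map_app' x := by simp [diagHermitian, Fin.sum_univ_succ]

lemma repNumber_diagHermitian_fin_zero [DecidableEq R] (a : Fin 0 → R) (c : R) :
    repNumber (diagHermitian a) c = if c = 0 then 1 else 0 := by
  rcases eq_or_ne c 0 with rfl | hc
  · simp [repNumber, diagHermitian_apply]
  · simp [repNumber, diagHermitian_apply, hc, hc.symm]

lemma repNumber_diagHermitian_cons [Fintype R] {n : ℕ} (b : R) (a : Fin n → R) (c : R) :
    repNumber (diagHermitian (Fin.cons b a : Fin (n + 1) → R)) c =
      ∑ m, repNumber (b • gaussianNorm R) m * repNumber (diagHermitian a) (c - m) := by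
  rw [← repNumber_eq_of_isometryEquiv (diagHermitianConsEquiv b a), repNumber_prod]

end DiagHermitian

section FiniteField

variable {F : Type*} [Field F] [Fintype F] [DecidableEq F]

lemma repNumber_sq (hF : ringChar F ≠ 2) (m : F) :
    (repNumber (QuadraticMap.sq : QuadraticForm F F) m : ℤ) = quadraticChar F m + 1 := by
  rw [← quadraticChar_card_sqrts hF m, Set.toFinset_card, ← Nat.card_eq_fintype_card, repNumber]
  simp only [QuadraticMap.sq_apply, ← sq]
  rfl

lemma sum_quadraticChar_mul_quadraticChar_sub (hF : ringChar F ≠ 2) (m : F) :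
    ∑ x, quadraticChar F x * quadraticChar F (m - x) =
      -quadraticChar F (-1) + if m = 0 then Fintype.card F * quadraticChar F (-1) else 0 := by
  split_ifs with hm
  · have hsummand (x : F) : quadraticChar F x * quadraticChar F (m - x) =
        quadraticChar F (-1) * if x = 0 then 0 else 1 := by
      rw [hm, zero_sub, neg_eq_neg_one_mul, map_mul]
      split_ifs with hx
      · simp [hx]
      · linear_combination quadraticChar F (-1) * quadraticChar_sq_one hx
    simp_rw [hsummand, ← Finset.mul_sum]
    rw [Finset.sum_ite, Finset.sum_const_zero, zero_add, Finset.sum_const, nsmul_one,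
      Finset.filter_ne', Finset.card_erase_of_mem (Finset.mem_univ _), Finset.card_univ,
      Nat.cast_pred Fintype.card_pos]
    ring
  · have hJacobi : ∑ x, quadraticChar F x * quadraticChar F (1 - x) = -quadraticChar F (-1) := by
      simpa only [(quadraticChar_isQuadratic F).inv, jacobiSum] using
        jacobiSum_nontrivial_inv (quadraticChar_ne_one hF)
    rw [add_zero, ← hJacobi, ← Equiv.sum_comp (Equiv.mulLeft₀ m hm)]
    refine Finset.sum_congr rfl fun x _ => ?_
    rw [Equiv.mulLeft₀_apply, ← mul_one_sub, map_mul, map_mul]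
    linear_combination quadraticChar F x * quadraticChar F (1 - x) * quadraticChar_sq_one hm

lemma repNumber_gaussianNorm (hF : ringChar F ≠ 2) (m : F) :
    (repNumber (gaussianNorm F) m : ℤ) =
      Fintype.card F - quadraticChar F (-1) +
        if m = 0 then Fintype.card F * quadraticChar F (-1) else 0 := by
  have hsum : ∑ x, quadraticChar F x = 0 := quadraticChar_sum_zero hF
  have hsum_sub : ∑ x, quadraticChar F (m - x) = 0 :=
    (Equiv.sum_comp (Equiv.subLeft m) _).trans hsum
  rw [gaussianNorm, repNumber_prod]
  push_cast
  simp only [repNumber_sq hF, add_mul, mul_add, one_mul, mul_one, Finset.sum_add_distrib, hsum,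
    hsum_sub, sum_quadraticChar_mul_quadraticChar_sub hF m, Finset.sum_const, Finset.card_univ,
    nsmul_one]
  ring

lemma repNumber_smul_gaussianNorm (hF : ringChar F ≠ 2) {b : F} (hb : b ≠ 0) (m : F) :
    (repNumber (b • gaussianNorm F) m : ℤ) =
      Fintype.card F - quadraticChar F (-1) +
        if m = 0 then Fintype.card F * quadraticChar F (-1) else 0 := by
  rw [← Units.val_mk0 hb, repNumber_units_smul, repNumber_gaussianNorm hF]
  simp only [Units.mul_right_eq_zero]

theorem card_mul_repNumber_diagHermitian (hF : ringChar F ≠ 2) {n : ℕ} {a : Fin n → F}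
    (ha : ∀ i, a i ≠ 0) {c : F} (hc : c ≠ 0) :
    (Fintype.card F * repNumber (diagHermitian a) c : ℤ) =
      Fintype.card F ^ (2 * n) - (quadraticChar F (-1) * Fintype.card F) ^ n := by
  induction a using Fin.consInduction with
  | elim0 => simp [repNumber_diagHermitian_fin_zero, hc]
  | @cons n b a ih =>
    have hb : b ≠ 0 := ha 0
    have htotal : ∑ m, (repNumber (diagHermitian a) (c - m) : ℤ) = Fintype.card F ^ (2 * n) := by
      refine (Equiv.sum_comp (Equiv.subLeft c) fun m => (repNumber _ m : ℤ)).trans ?_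
      rw [← Nat.cast_sum, sum_repNumber]
      simp [pow_mul, sq]
    rw [repNumber_diagHermitian_cons]
    push_cast
    simp only [repNumber_smul_gaussianNorm hF hb, add_mul, Finset.sum_add_distrib, ite_mul,
      zero_mul, Finset.sum_ite_eq', Finset.mem_univ, if_true, sub_zero, ← Finset.mul_sum, htotal]
    linear_combination Fintype.card F * quadraticChar F (-1) * ih fun i => ha i.succ

theorem repDensity_diagHermitian_of_field (hF : ringChar F ≠ 2) {n : ℕ} {a : Fin n → F}
    (ha : ∀ i, a i ≠ 0) {c : F} (hc : c ≠ 0) :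
    repDensity (diagHermitian a) c = 1 - (quadraticChar F (-1) / Fintype.card F : ℝ) ^ n := by
  have hcount : (Fintype.card F * repNumber (diagHermitian a) c : ℝ) =
      Fintype.card F ^ (2 * n) - (quadraticChar F (-1) * Fintype.card F) ^ n := by
    exact_mod_cast card_mul_repNumber_diagHermitian hF ha hc
  have hV : (Nat.card (Fin n → F × F) : ℝ) = Fintype.card F ^ (2 * n) := by
    simp [pow_mul, sq]
  rw [repDensity, Nat.card_eq_fintype_card, hcount, hV, div_pow, mul_pow, two_mul,
    pow_add]
  field_simp

end FiniteField

section ZMod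

lemma isTwiceSqZero_natCast_of_odd {m n : ℕ} (hm : Odd m) (h : m ∣ n ^ 2) :
    IsTwiceSqZero (n : ZMod m) := by
  obtain ⟨k, hk⟩ := hm
  have hsq : (n : ZMod m) ^ 2 = 0 := by
    exact_mod_cast (ZMod.natCast_eq_zero_iff _ _).2 h
  have hhalf : (2 * k + 1 : ZMod m) = 0 := by
    exact_mod_cast (ZMod.natCast_eq_zero_iff _ _).2 (dvd_of_eq hk)
  exact ⟨(k + 1) * n, by rw [mul_pow, hsq, mul_zero], by linear_combination n * hhalf⟩

lemma isTwiceSqZero_two_mul {m k : ℕ} (h : m ∣ k ^ 2) :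
    IsTwiceSqZero ((2 * k : ℕ) : ZMod m) :=
  ⟨k, by exact_mod_cast (ZMod.natCast_eq_zero_iff _ _).2 h, by push_cast; rfl⟩

lemma exists_mul_eq_of_castHom_eq_zero {m n : ℕ} (h : n ∣ m) {t : ZMod m}
    (ht : ZMod.castHom h (ZMod n) t = 0) : ∃ s, s * (n : ZMod m) = t := by
  obtain ⟨t, rfl⟩ := ZMod.intCast_surjective t
  rw [map_intCast, ZMod.intCast_zmod_eq_zero_iff_dvd] at ht
  obtain ⟨s, rfl⟩ := ht
  exact ⟨s, by push_cast; ring⟩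

/-- The density of the solutions of `∑ aᵢ xᵢ x̄ᵢ = c` in `(ZMod n)[i]^ι`. -/
noncomputable def hermitianDensity {ι : Type*} [Fintype ι] (a : ι → ℤ) (c : ℤ) (n : ℕ) : ℝ :=
  repDensity (diagHermitian fun i => (a i : ZMod n)) (c : ZMod n)

variable {ι : Type*} [Fintype ι] (a : ι → ℤ)

lemma hermitianDensity_eq_zpow_mul (c : ℤ) {n : ℕ} (hn : 0 < n) :
    hermitianDensity a c n = (n : ℝ) ^ (1 - 2 * Fintype.card ι : ℤ) *
      repNumber (diagHermitian fun i => (a i : ZMod n)) c := by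
  have hcard : (Nat.card (ι → ZMod n × ZMod n) : ℝ) = n ^ (2 * Fintype.card ι) := by
    simp [Nat.card_fun, pow_mul, sq]
  have hn' : (n : ℝ) ≠ 0 := by exact_mod_cast hn.ne'
  rw [hermitianDensity, repDensity, hcard, Nat.card_zmod, zpow_sub₀ hn', zpow_one,
    mul_div_right_comm]
  norm_cast

lemma hermitianDensity_eq_of_dvd {m n : ℕ} [NeZero m] (h : n ∣ m)
    (hn : IsTwiceSqZero (n : ZMod m)) {c : ℤ} (hc : IsCoprime (m : ℤ) c) :
    hermitianDensity a c m = hermitianDensity a c n := by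
  set π := ZMod.castHom h (ZMod n)
  have hπ : Function.Surjective π := ZMod.castHom_surjective h
  let f : (ι → ZMod m × ZMod m) →+ (ι → ZMod n × ZMod n) :=
    ((π : ZMod m →+ ZMod n).prodMap (π : ZMod m →+ ZMod n)).compLeft ι
  have hf : Function.Surjective f := (Prod.map_surjective.2 ⟨hπ, hπ⟩).comp_left
  have hker (t : ZMod m) (ht : π t = 0) : IsTwiceSqZero t := by
    obtain ⟨s, rfl⟩ := exists_mul_eq_of_castHom_eq_zero h ht
    exact hn.mul_left s
  have hform (x : ι → ZMod m × ZMod m) : diagHermitian (fun i => (a i : ZMod n)) (f x) =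
      π (diagHermitian (fun i => (a i : ZMod m)) x) := by
    simp only [map_diagHermitian, map_intCast]
    rfl
  have hunit : IsUnit (c : ZMod m) := (ZMod.coe_int_isUnit_iff_isCoprime c m).2 hc
  rw [hermitianDensity, repDensity_eq_of_lift hπ hf hker hform hunit, map_intCast,
    hermitianDensity]

lemma tendsto_hermitianDensity_pow {p k : ℕ} [NeZero p] {c : ℤ} (hc : IsCoprime (p : ℤ) c)
    (hlift : ∀ j ≥ k, IsTwiceSqZero ((p ^ j : ℕ) : ZMod (p ^ (j + 1)))) :
    Tendsto (fun j => hermitianDensity a c (p ^ j)) atTop (𝓝 (hermitianDensity a c (p ^ k))) := by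
  refine tendsto_atTop_of_eventually_const (i₀ := k) fun j hj => ?_
  induction j, hj using Nat.le_induction with
  | base => rfl
  | succ j hj ih =>
    rw [hermitianDensity_eq_of_dvd a (pow_dvd_pow p j.le_succ) (hlift j hj)
      (by exact_mod_cast hc.pow_left), ih]

theorem tendsto_hermitianDensity_of_ne_two {n : ℕ} {a : Fin n → ℤ} {p : ℕ} [Fact p.Prime]
    (hp : p ≠ 2) (ha : ∀ i, ¬(p : ℤ) ∣ a i) {c : ℤ} (hc : ¬(p : ℤ) ∣ c) :
    Tendsto (fun j => hermitianDensity a c (p ^ j)) atTop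
      (𝓝 (1 - (ZMod.χ₄ p / p : ℝ) ^ n)) := by
  have hprime : p.Prime := Fact.out
  have hF : ringChar (ZMod p) ≠ 2 := by rwa [ZMod.ringChar_zmod_n]
  have hmodp : hermitianDensity a c (p ^ 1) = 1 - (ZMod.χ₄ p / p : ℝ) ^ n := by
    rw [pow_one, hermitianDensity, repDensity_diagHermitian_of_field hF, quadraticChar_neg_one hF,
      ZMod.card]
    · simpa only [ne_eq, ZMod.intCast_zmod_eq_zero_iff_dvd] using ha
    · rwa [ne_eq, ZMod.intCast_zmod_eq_zero_iff_dvd]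
  rw [← hmodp]
  refine tendsto_hermitianDensity_pow a
    ((Nat.prime_iff_prime_int.1 hprime).coprime_iff_not_dvd.2 hc) fun j hj => ?_
  refine isTwiceSqZero_natCast_of_odd (hprime.odd_of_ne_two hp).pow ?_
  rw [← pow_mul]
  exact pow_dvd_pow p (by omega)

lemma tendsto_hermitianDensity_two_pow {c : ℤ} (hc : Odd c) :
    Tendsto (fun j => hermitianDensity a c (2 ^ j)) atTop (𝓝 (hermitianDensity a c (2 ^ 3))) := by
  refine tendsto_hermitianDensity_pow a (by simpa using hc) fun j hj => ?_
  obtain ⟨k, rfl⟩ := Nat.exists_eq_add_of_le' hj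
  rw [show 2 ^ (k + 3) = 2 * 2 ^ (k + 2) by ring]
  refine isTwiceSqZero_two_mul ?_
  rw [← pow_mul]
  exact pow_dvd_pow 2 (by omega)

lemma repNumber_gaussianNorm_zmod_eight (m : ZMod 8) :
    repNumber (gaussianNorm (ZMod 8)) m = (![8, 16, 16, 0, 8, 16, 0, 0] : Fin 8 → ℕ) m := by
  have hcard : repNumber (gaussianNorm (ZMod 8)) m =
      Fintype.card {z : ZMod 8 × ZMod 8 // z.1 ^ 2 + z.2 ^ 2 = m} := by
    simp only [repNumber, gaussianNorm_apply, Nat.card_eq_fintype_card]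
  rw [hcard]
  fin_cases m <;> decide +kernel

lemma repNumber_lorentz_zmod_eight :
    repNumber (diagHermitian (![1, 1, -1] : Fin 3 → ZMod 8)) (-1) = 24576 := by
  have hneg (m : ZMod 8) : repNumber ((-1 : ZMod 8) • gaussianNorm (ZMod 8)) m =
      repNumber (gaussianNorm (ZMod 8)) (-m) := by
    simpa using repNumber_units_smul (-1) (gaussianNorm (ZMod 8)) m
  simp only [Matrix.vecCons, repNumber_diagHermitian_cons, repNumber_diagHermitian_fin_zero,
    one_smul, hneg, repNumber_gaussianNorm_zmod_eight]
  decide +kernel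

lemma hermitianDensity_lorentz_eight : hermitianDensity ![1, 1, -1] (-1) (2 ^ 3) = 3 / 4 := by
  have hcoeff : (fun i => ((![1, 1, -1] : Fin 3 → ℤ) i : ZMod 8)) = ![1, 1, -1] := by
    ext i
    fin_cases i <;> simp
  rw [show 2 ^ 3 = 8 from rfl, hermitianDensity, repDensity, hcoeff, Int.cast_neg, Int.cast_one,
    repNumber_lorentz_zmod_eight]
  norm_num [Nat.card_eq_fintype_card, ZMod.card]

end ZMod

section EulerProduct

lemma tendsto_prod_primes_one_sub {F : Type*} [NormedField F] [CompleteSpace F] {f : ℕ →*₀ F}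
    {s : F} (hnorm : Summable (‖f ·‖)) (hf : HasSum f s) (hs : s ≠ 0) :
    Tendsto (fun N => ∏ p ∈ Finset.range N with p.Prime, (1 - f p)) atTop (𝓝 s⁻¹) := by
  rw [← hf.tsum_eq] at hs ⊢
  simpa only [Finset.prod_inv_distrib, inv_inv, Nat.primesBelow] using
    (EulerProduct.eulerProduct_completely_multiplicative hnorm).inv₀ hs

/-- The completely multiplicative function `n ↦ χ₄ n / n`. -/
noncomputable def chiFourDiv : ℕ →*₀ ℝ where
  toFun n := ZMod.χ₄ n / n
  map_zero' := by simp
  map_one' := by simp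
  map_mul' m n := by
    push_cast
    rw [map_mul, Int.cast_mul, mul_div_mul_comm]

lemma sin_pi_mul_nat_div_two (n : ℕ) : Real.sin (Real.pi * n / 2) = ZMod.χ₄ n := by
  have hperiodic : Function.Periodic (fun n : ℕ => Real.sin (Real.pi * n / 2)) 4 := fun n => by
    change Real.sin (Real.pi * (n + 4 : ℕ) / 2) = Real.sin (Real.pi * n / 2)
    rw [← Real.sin_add_two_pi (Real.pi * n / 2)]
    push_cast
    ring_nf
  rw [← hperiodic.map_mod_nat n, ← ZMod.natCast_mod n 4]
  have hlt : n % 4 < 4 := Nat.mod_lt _ (by norm_num)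
  interval_cases n % 4
  · simp
  · simp
  · simp [show ZMod.χ₄ 2 = 0 by decide]
  · have hangle : Real.pi * (3 : ℕ) / 2 = Real.pi / 2 + Real.pi := by
      push_cast
      ring
    rw [hangle, Real.sin_add_pi, Real.sin_pi_div_two, show ZMod.χ₄ (3 : ℕ) = -1 by decide]
    simp

lemma hasSum_chiFourDiv_pow_three : HasSum (fun n => chiFourDiv n ^ 3) (Real.pi ^ 3 / 32) := by
  have hcube (x : ZMod 4) : ZMod.χ₄ x ^ 3 = ZMod.χ₄ x := by decide +revert
  convert hasSum_L_function_mod_four_eval_three using 2 with n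
  change (ZMod.χ₄ n / n : ℝ) ^ 3 = _
  rw [sin_pi_mul_nat_div_two, div_pow, ← Int.cast_pow, hcube, one_div_mul_eq_div]

lemma tendsto_prod_one_sub_chiFourDiv_pow_three :
    Tendsto (fun N => ∏ p ∈ Finset.range N with p.Prime, (1 - chiFourDiv p ^ 3)) atTop
      (𝓝 (32 / Real.pi ^ 3)) := by
  rw [← inv_div]
  exact tendsto_prod_primes_one_sub (f := (powMonoidWithZeroHom three_ne_zero).comp chiFourDiv)
    hasSum_chiFourDiv_pow_three.summable.norm hasSum_chiFourDiv_pow_three (by positivity)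

end EulerProduct

section LocalDensity

/-- The `p`-adic density of the solutions of `x₁x̄₁ + x₂x̄₂ - x₃x̄₃ = -1` over `ℤ[i]`, for `p`
prime. -/
noncomputable def localDensity (p : ℕ) : ℝ :=
  if p = 2 then 3 / 4 else 1 - (ZMod.χ₄ p / p : ℝ) ^ 3

lemma tendsto_hermitianDensity_localDensity {p : ℕ} (hp : p.Prime) :
    Tendsto (fun j => hermitianDensity ![1, 1, -1] (-1) (p ^ j)) atTop (𝓝 (localDensity p)) := by
  have hone : ¬(p : ℤ) ∣ 1 := (Nat.prime_iff_prime_int.1 hp).not_dvd_one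
  have : Fact p.Prime := ⟨hp⟩
  rw [localDensity]
  split_ifs with hp2
  · subst hp2
    rw [← hermitianDensity_lorentz_eight]
    exact tendsto_hermitianDensity_two_pow _ odd_neg_one
  · refine tendsto_hermitianDensity_of_ne_two hp2 ?_ (by rwa [dvd_neg])
    simpa [Fin.forall_fin_succ] using hone

lemma tendsto_prod_localDensity :
    Tendsto (fun N => ∏ p ∈ Finset.range N with p.Prime, localDensity p) atTop
      (𝓝 (2 ^ 3 * 3 / Real.pi ^ 3)) := by
  have hfactor (p : ℕ) :
      localDensity p = (if p = 2 then 3 / 4 else 1) * (1 - chiFourDiv p ^ 3) := by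
    change _ = _ * (1 - (ZMod.χ₄ p / p : ℝ) ^ 3)
    rw [localDensity]
    split_ifs with hp
    · rw [hp, show ZMod.χ₄ (2 : ℕ) = 0 by decide]
      simp
    · rw [one_mul]
  have hlimit : 3 / 4 * (32 / Real.pi ^ 3) = 2 ^ 3 * 3 / Real.pi ^ 3 := by ring
  rw [← hlimit]
  refine (tendsto_prod_one_sub_chiFourDiv_pow_three.const_mul (3 / 4)).congr' ?_
  filter_upwards [eventually_gt_atTop 2] with N hN
  have htwo : 2 ∈ (Finset.range N).filter Nat.Prime := by simp [hN, Nat.prime_two]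
  simp_rw [hfactor, Finset.prod_mul_distrib, Finset.prod_ite_eq', if_pos htwo]

end LocalDensity

section Gaussian

/-- Reduction of the real and imaginary parts of a Gaussian integer modulo `n`. -/
def reduceGaussian (n : ℕ) : GaussianInt →ₗ[ℤ] ZMod n × ZMod n where
  toFun z := (z.re, z.im)
  map_add' _ _ := by simp
  map_smul' _ _ := by simp

lemma reduceGaussian_surjective (n : ℕ) : Function.Surjective (reduceGaussian n) := by
  rintro ⟨a, b⟩
  obtain ⟨a, rfl⟩ := ZMod.intCast_surjective a
  obtain ⟨b, rfl⟩ := ZMod.intCast_surjective b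
  exact ⟨⟨a, b⟩, rfl⟩

lemma ker_reduceGaussian (n : ℕ) :
    (reduceGaussian n).ker = (Ideal.span {(n : GaussianInt)}).restrictScalars ℤ := by
  ext z
  rw [Submodule.restrictScalars_mem, Ideal.mem_span_singleton, ← Int.cast_natCast,
    Zsqrtd.intCast_dvd, ← ZMod.intCast_zmod_eq_zero_iff_dvd, ← ZMod.intCast_zmod_eq_zero_iff_dvd]
  exact Prod.mk_eq_zero

/-- `ℤ[i]/(n)` is `(ZMod n)[i]`, through real and imaginary parts. -/
noncomputable def gaussianQuotientEquiv (n : ℕ) :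
    (GaussianInt ⧸ Ideal.span {(n : GaussianInt)}) ≃ₗ[ℤ] ZMod n × ZMod n :=
  (Submodule.Quotient.restrictScalarsEquiv ℤ _).symm ≪≫ₗ
    Submodule.quotEquivOfEq _ _ (ker_reduceGaussian n).symm ≪≫ₗ
      (reduceGaussian n).quotKerEquivOfSurjective (reduceGaussian_surjective n)

lemma gaussianQuotientEquiv_mk (n : ℕ) (z : GaussianInt) :
    gaussianQuotientEquiv n (Ideal.Quotient.mk _ z) = reduceGaussian n z :=
  rfl

variable {ι : Type*} [Fintype ι] (a : ι → ℤ) (c : ℤ) (n : ℕ)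

lemma natCast_dvd_hermitian_sub_iff (x : ι → GaussianInt) :
    (n : GaussianInt) ∣ ∑ i, a i * (star (x i) * x i) - c ↔
      diagHermitian (fun i => (a i : ZMod n)) (fun i => reduceGaussian n (x i)) = c := by
  have hnorm (z : GaussianInt) : star z * z = ((z.re ^ 2 + z.im ^ 2 : ℤ) : GaussianInt) := by
    rw [mul_comm, ← Zsqrtd.norm_eq_mul_conj, Zsqrtd.norm_def]
    congr 1
    ring
  have hvalue : ∑ i, a i * (star (x i) * x i) - c =
      ((∑ i, a i * ((x i).re ^ 2 + (x i).im ^ 2) - c : ℤ) : GaussianInt) := by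
    simp only [hnorm]
    push_cast
    rfl
  rw [hvalue, ← Int.cast_natCast, Zsqrtd.intCast_dvd_intCast, ← ZMod.intCast_zmod_eq_zero_iff_dvd,
    Int.cast_sub, sub_eq_zero, diagHermitian_apply]
  push_cast
  rfl

lemma natCard_gaussianQuotient_solutions :
    Nat.card {y : ι → GaussianInt ⧸ Ideal.span {(n : GaussianInt)} |
      ∃ x : ι → GaussianInt, (∀ i, Ideal.Quotient.mk _ (x i) = y i) ∧
        (n : GaussianInt) ∣ ∑ i, a i * (star (x i) * x i) - c} =
      repNumber (diagHermitian fun i => (a i : ZMod n)) c := by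
  let e := Equiv.piCongrRight fun _ : ι => (gaussianQuotientEquiv n).toEquiv
  have he (x : ι → GaussianInt) :
      (e fun i => Ideal.Quotient.mk _ (x i)) = fun i => reduceGaussian n (x i) :=
    funext fun i => gaussianQuotientEquiv_mk n (x i)
  refine Nat.card_congr (e.subtypeEquiv fun y => ?_)
  constructor
  · rintro ⟨x, hx, hdvd⟩
    obtain rfl : (fun i => Ideal.Quotient.mk _ (x i)) = y := funext hx
    rw [he]
    exact (natCast_dvd_hermitian_sub_iff a c n x).1 hdvd
  · obtain ⟨x, rfl⟩ : ∃ x : ι → GaussianInt, (fun i => Ideal.Quotient.mk _ (x i)) = y :=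
      Ideal.Quotient.mk_surjective.comp_left y
    intro hx
    rw [he] at hx
    exact ⟨x, fun _ => rfl, (natCast_dvd_hermitian_sub_iff a c n x).2 hx⟩

end Gaussian

/-- Local density computation for `Q = I_{2,1}` over the Gaussian integers and
`k = 1`: for every prime `p` the limit
`δ_p = lim_j p^{−5j}·#{x ∈ (ℤ[i]/p^jℤ[i])³ : x₁x̄₁ + x₂x̄₂ − x₃x̄₃ = −1}` exists,
and `∏_p δ_p = 2³·3·π^{−3} = 24/π³`.
(Residue classes mod `p^j` are counted via lifts: a class `y` is counted when some
(equivalently, any) lift `x` of `y` satisfies `p^j ∣ x₁x̄₁ + x₂x̄₂ − x₃x̄₃ + 1` in `ℤ[i]`.) -/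
theorem local_density_I21_gaussian :
    ∃ δp : ℕ → ℝ,
      (∀ p : ℕ, p.Prime →
        Tendsto (fun j : ℕ =>
            ((p : ℝ) ^ (-(5 * j : ℤ))) *
            (Nat.card {y : Fin 3 → (GaussianInt ⧸ Ideal.span {((p : GaussianInt)) ^ j}) |
              ∃ x : Fin 3 → GaussianInt,
                (∀ i, Ideal.Quotient.mk (Ideal.span {((p : GaussianInt)) ^ j}) (x i) = y i) ∧
                (p : GaussianInt) ^ j ∣
                  star (x 0) * x 0 + star (x 1) * x 1 - star (x 2) * x 2 + 1} : ℝ))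
          atTop (nhds (δp p))) ∧
      Tendsto (fun N : ℕ => ∏ p ∈ (Finset.range N).filter Nat.Prime, δp p)
        atTop (nhds (2 ^ 3 * 3 / Real.pi ^ 3)) := by
  refine ⟨localDensity, fun p hp => ?_, tendsto_prod_localDensity⟩
  refine (tendsto_hermitianDensity_localDensity hp).congr fun j => ?_
  have hpow : ((p ^ j : ℕ) : ℝ) ^ (1 - 2 * Fintype.card (Fin 3) : ℤ) =
      (p : ℝ) ^ (-(5 * j : ℤ)) := by
    rw [Fintype.card_fin, Nat.cast_pow, ← zpow_natCast, ← zpow_mul]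
    congr 1
    push_cast
    ring
  rw [hermitianDensity_eq_zpow_mul _ _ (pow_pos hp.pos j), hpow,
    ← natCard_gaussianQuotient_solutions, ← Nat.cast_pow (α := GaussianInt)]
  simp [Fin.sum_univ_three, sub_eq_add_neg]
end
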